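/- Let k ≥ 1 be an integer and u > 0 with u ≠ 1. Then for every w > u + u^{−1}, the k-th derivative of Δ_{k,u} at w equals (−1)^k (2k)! (w − u − u^{−1})^k / ( k! (w² − 4)^{k + 1/2} ). -/

import Mathlib

open Set MeasureTheory Filter

noncomputable def Pk (k : ℕ) (x : ℝ) : ℝ :=
  ∑ n ∈ Finset.range (k + 1), ((2 * k).choose (n + k) : ℝ) * (-x) ^ n

noncomputable def Pkhat (k : ℕ) (x : ℝ) : ℝ :=
  Pk k x - ((2 * k).choose k : ℝ)

/-- The kernel `Φ_k(x,t)`. -/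
noncomputable def Phi (k : ℕ) (x t : ℝ) : ℝ :=
  x⁻¹ * (if t ≤ x then Pk k (t / x) else -Pkhat k (x / t))

/-- The function `ψ_k`. -/
noncomputable def psiK (k : ℕ) (y : ℝ) : ℝ :=
  if 1 ≤ y then Pk k y⁻¹ else -Pkhat k y

/-- `f` is a `k`-Stieltjes function on `(0,∞)` (for `k ≥ 2`). -/
def IsStieltjesK (k : ℕ) (f : ℝ → ℝ) : Prop :=
  (∀ x > 0, 0 ≤ f x) ∧
  ContDiffOn ℝ (2 * k - 3 : ℕ) f (Ioi 0) ∧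
  (∀ n, 1 ≤ n → n ≤ k - 1 → ∀ x > 0,
    0 ≤ (-1 : ℝ) ^ (n - 1) * iteratedDeriv (2 * n - 1) (fun y => y ^ n * f y) x) ∧
  ConvexOn ℝ (Ioi 0)
    (fun x => (-1 : ℝ) ^ (k - 1) * iteratedDeriv (2 * k - 3) (fun y => y ^ k * f y) x)

/-- `g` is `k`-monotone on the open interval `I`. -/
def KMonotoneOn (k : ℕ) (g : ℝ → ℝ) (I : Set ℝ) : Prop :=
  if k = 1 then (∀ x ∈ I, 0 ≤ g x) ∧ AntitoneOn g I
  else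
    ContDiffOn ℝ (k - 2 : ℕ) g I ∧
    ∀ n ≤ k - 2,
      (∀ x ∈ I, 0 ≤ (-1 : ℝ) ^ n * iteratedDeriv n g x) ∧
      AntitoneOn (fun x => (-1 : ℝ) ^ n * iteratedDeriv n g x) I ∧
      ConvexOn ℝ I (fun x => (-1 : ℝ) ^ n * iteratedDeriv n g x)

/-- `v(w) = (w + √(w²−4))/2`. -/
noncomputable def vOf (w : ℝ) : ℝ := (w + Real.sqrt (w ^ 2 - 4)) / 2

/-- `F_u(w) = f(uv) f(u/v)`. -/
noncomputable def Fu (f : ℝ → ℝ) (u w : ℝ) : ℝ := f (u * vOf w) * f (u / vOf w)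

/-- `f` is `k`-hyperbolically monotone. -/
def IsHMk (k : ℕ) (f : ℝ → ℝ) : Prop :=
  (∀ x > 0, 0 ≤ f x) ∧ ∀ u > 0, KMonotoneOn k (Fu f u) (Ioi 2)

/-- `f` is power regular `k`-hyperbolically monotone. -/
def IsPRHMk (k : ℕ) (f : ℝ → ℝ) : Prop :=
  ∀ p > 0, IsHMk k (fun x => f x ^ p)

/-- `ψ_f(x) = -x (log f)'(x)`. -/
noncomputable def psiF (f : ℝ → ℝ) (x : ℝ) : ℝ := -x * deriv (fun y => Real.log (f y)) x

/-- `Δ_u(f)`. -/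
noncomputable def DeltaU (f : ℝ → ℝ) (u w : ℝ) : ℝ :=
  (psiF f (u * vOf w) - psiF f (u / vOf w)) / (vOf w - (vOf w)⁻¹)

/-- `Δ_{k,u}`. -/
noncomputable def DeltaKU (k : ℕ) (u w : ℝ) : ℝ :=
  (psiK k (u * vOf w) - psiK k (u / vOf w)) / (vOf w - (vOf w)⁻¹)

/-!
With `v = v(w)` one has `v + v⁻¹ = w` and `v - v⁻¹ = √(w² - 4)`. Past `u + u⁻¹` the two arguments of
`ψ_k` lie on either side of `1`, and the binomial theorem
`P_k(1/y) + \hat P_k(y) = (2 - y - 1/y)^k` gives `Δ_{k,u}(w) = A^k / √(w² - 4) - q(w)` with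
`A = 2 - uv - (uv)⁻¹` and `q` a polynomial of degree less than `k`, which the `k`-th derivative
kills. Write `c = u + u⁻¹`. As `A` is a root of `A² = (4 - c w) A - (w - c)²`, the functions
`f_n = A^n / √(w² - 4)` satisfy a three-term recurrence with polynomial coefficients, and the
Leibniz rule turns it into an induction for
`f_n^{(n)} = (-1)^n (2n)!/n! (w - c)^n / (w² - 4)^{n + 1/2}`.
-/

section IteratedDeriv

variable {𝕜 : Type*} [NontriviallyNormedField 𝕜]

theorem iteratedDeriv_linear_mul {f : 𝕜 → 𝕜} {n : ℕ} {x : 𝕜}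
    (hf : ContDiffAt 𝕜 (n + 1 : ℕ) f x) (a b : 𝕜) :
    iteratedDeriv (n + 1) (fun y => (a * y + b) * f y) x
      = (a * x + b) * iteratedDeriv (n + 1) f x + (n + 1) * a * iteratedDeriv n f x := by
  have deriv_linear : deriv (fun y : 𝕜 => a * y + b) = fun _ => a := by
    funext y
    simp
  have higher_deriv_linear (i : ℕ) : iteratedDeriv (i + 2) (fun y : 𝕜 => a * y + b) x = 0 := by
    rw [iteratedDeriv_succ', deriv_linear, iteratedDeriv_succ', deriv_const', iteratedDeriv_const]
    simp
  have leibniz := iteratedDeriv_mul (f := fun y : 𝕜 => a * y + b) (by fun_prop) hf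
  rw [Finset.sum_range_succ', Finset.sum_range_succ', Finset.sum_eq_zero fun i _ => by
    rw [higher_deriv_linear, mul_zero, zero_mul]] at leibniz
  refine leibniz.trans ?_
  simp only [zero_add, iteratedDeriv_one, iteratedDeriv_zero, deriv_linear, Nat.choose_one_right,
    Nat.choose_zero_right, Nat.add_sub_cancel, Nat.sub_zero, Nat.cast_add, Nat.cast_one]
  ring

theorem iteratedDeriv_sub_const_mul {f : 𝕜 → 𝕜} {n : ℕ} {x : 𝕜}
    (hf : ContDiffAt 𝕜 (n + 1 : ℕ) f x) (b : 𝕜) :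
    iteratedDeriv (n + 1) (fun y => (y - b) * f y) x
      = (x - b) * iteratedDeriv (n + 1) f x + (n + 1) * iteratedDeriv n f x := by
  simpa [sub_eq_add_neg] using iteratedDeriv_linear_mul hf 1 (-b)

theorem iteratedDeriv_succ_eq_deriv_of_eqOn {F : Type*} [NormedAddCommGroup F] [NormedSpace 𝕜 F]
    {s : Set 𝕜} (hs : IsOpen s) {f g : 𝕜 → F} {n : ℕ} (h : EqOn (iteratedDeriv n f) g s)
    {x : 𝕜} (hx : x ∈ s) : iteratedDeriv (n + 1) f x = deriv g x := by
  rw [iteratedDeriv_succ]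
  exact (h.eventuallyEq_of_mem (hs.mem_nhds hx)).deriv_eq

theorem iteratedDeriv_eval_eq_zero_of_degree_lt {p : Polynomial 𝕜} {n : ℕ} (hp : p.degree < n) :
    iteratedDeriv n (fun x => p.eval x) = 0 := by
  have iteratedDeriv_eval (m : ℕ) : iteratedDeriv m (fun x => p.eval x)
      = fun x => (Polynomial.derivative^[m] p).eval x := by
    induction m with
    | zero => simp
    | succ m ih =>
      funext x
      rw [iteratedDeriv_succ, ih, Function.iterate_succ_apply', Polynomial.deriv]
  rw [iteratedDeriv_eval, Polynomial.iterate_derivative_eq_zero_of_degree_lt hp]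
  simp only [Polynomial.eval_zero]
  rfl

end IteratedDeriv

section RadicalQuotient

/-- The functions `(x - c)^m / (x² - 4)^{j/2}`, among which the derivatives in question are found.
The half-integer powers are encoded as natural powers of the square root. -/
noncomputable def radicalQuotient (c : ℝ) (m j : ℕ) (x : ℝ) : ℝ :=
  (x - c) ^ m / √(x ^ 2 - 4) ^ j

variable {c x : ℝ} {m j : ℕ}

theorem isOpen_setOf_four_lt_sq : IsOpen {x : ℝ | 4 < x ^ 2} :=
  isOpen_lt continuous_const (continuous_pow 2)

theorem radicalQuotient_succ_left :
    radicalQuotient c (m + 1) j x = (x - c) * radicalQuotient c m j x := by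
  rw [radicalQuotient, radicalQuotient, pow_succ', mul_div_assoc]

theorem radicalQuotient_add_two_right (hx : 4 < x ^ 2) :
    radicalQuotient c m (j + 2) x = radicalQuotient c m j x / (x ^ 2 - 4) := by
  rw [radicalQuotient, radicalQuotient, pow_add, Real.sq_sqrt (sub_nonneg.2 hx.le), div_div]

theorem radicalQuotient_eq_div_rpow (hx : 4 ≤ x ^ 2) (n : ℕ) :
    radicalQuotient c n (2 * n + 1) x = (x - c) ^ n / (x ^ 2 - 4) ^ ((n : ℝ) + 1 / 2) := by
  rw [radicalQuotient, show (n : ℝ) + 1 / 2 = ((2 * n + 1 : ℕ) : ℝ) / 2 by push_cast; ring,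
    Real.rpow_div_two_eq_sqrt _ (sub_nonneg.2 hx), Real.rpow_natCast]

theorem hasDerivAt_sqrt_sq_sub_four (hx : 4 < x ^ 2) :
    HasDerivAt (fun y : ℝ => √(y ^ 2 - 4)) (x / √(x ^ 2 - 4)) x := by
  have hquad : HasDerivAt (fun y : ℝ => y ^ 2 - 4) (2 * x) x := by
    simpa using (hasDerivAt_pow 2 x).sub_const 4
  refine (hquad.sqrt (sub_pos.2 hx).ne').congr_deriv ?_
  rw [mul_div_mul_left _ _ two_ne_zero]

theorem hasDerivAt_radicalQuotient (hx : 4 < x ^ 2) :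
    HasDerivAt (radicalQuotient c m j)
      (m * (x - c) ^ (m - 1) / √(x ^ 2 - 4) ^ j - j * x * radicalQuotient c m (j + 2) x) x := by
  have hr : √(x ^ 2 - 4) ≠ 0 := (Real.sqrt_pos.2 (sub_pos.2 hx)).ne'
  have hnum : HasDerivAt (fun y : ℝ => (y - c) ^ m) (m * (x - c) ^ (m - 1)) x := by
    simpa using ((hasDerivAt_id x).sub_const c).fun_pow m
  refine (hnum.div ((hasDerivAt_sqrt_sq_sub_four hx).pow j) (pow_ne_zero j hr)).congr_deriv ?_
  rw [radicalQuotient]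
  cases j with
  | zero => simp
  | succ j =>
    simp only [Nat.add_sub_cancel, Pi.pow_apply]
    field_simp
    ring

/-- The factor `x - c` clears the truncated exponent `m - 1` of the derivative, so that the formula
holds for `m = 0` and at `x = c` too. -/
theorem sub_mul_deriv_radicalQuotient (hx : 4 < x ^ 2) :
    (x - c) * deriv (radicalQuotient c m j) x
      = m * radicalQuotient c m j x - j * x * (x - c) * radicalQuotient c m (j + 2) x := by
  have hpow : (x - c) * (m * (x - c) ^ (m - 1)) = m * (x - c) ^ m := by
    cases m with
    | zero => simp
    | succ m =>
      rw [Nat.add_sub_cancel]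
      ring
  have hdef : radicalQuotient c m j x = (x - c) ^ m / √(x ^ 2 - 4) ^ j := rfl
  rw [(hasDerivAt_radicalQuotient hx).deriv, mul_sub, ← mul_div_assoc, hpow, hdef]
  ring

variable {f g : ℝ → ℝ} {n : ℕ} {a : ℝ}

theorem iteratedDeriv_sub_mul_eqOn_radicalQuotient
    (hf : ContDiffOn ℝ (n + 1 : ℕ) f {x | 4 < x ^ 2})
    (hderiv : EqOn (iteratedDeriv n f) (fun x => a * radicalQuotient c n (2 * n + 1) x)
      {x | 4 < x ^ 2}) :
    EqOn (iteratedDeriv (n + 1) (fun y => (y - c) * f y))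
      (fun x => (2 * n + 1) * a * ((c * x - 4) * radicalQuotient c n (2 * n + 3) x))
      {x | 4 < x ^ 2} := by
  intro x hx
  have euler := sub_mul_deriv_radicalQuotient (c := c) (m := n) (j := 2 * n + 1) hx
  have hR : x ^ 2 - 4 ≠ 0 := (sub_pos.2 hx).ne'
  simp only [iteratedDeriv_sub_const_mul (hf.contDiffAt (isOpen_setOf_four_lt_sq.mem_nhds hx)),
    iteratedDeriv_succ_eq_deriv_of_eqOn isOpen_setOf_four_lt_sq hderiv hx, hderiv hx,
    deriv_const_mul_field', radicalQuotient_add_two_right hx] at euler ⊢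
  push_cast at euler
  have hK : radicalQuotient c n (2 * n + 1) x
      = (x ^ 2 - 4) * (radicalQuotient c n (2 * n + 1) x / (x ^ 2 - 4)) := by
    field_simp
  linear_combination a * euler + (2 * n + 1) * a * hK

theorem iteratedDeriv_sub_mul_sub_mul_of_eqOn_radicalQuotient
    (hf : ContDiffOn ℝ (n + 2 : ℕ) f {x | 4 < x ^ 2})
    (hderiv : EqOn (iteratedDeriv n f) (fun x => a * radicalQuotient c n (2 * n + 1) x)
      {x | 4 < x ^ 2}) (hx : 4 < x ^ 2) :
    iteratedDeriv (n + 2) (fun y => (y - c) * ((y - c) * f y)) x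
      = (2 * n + 1) * a * ((c * x - 4) * ((x - c) * deriv (radicalQuotient c n (2 * n + 3)) x)
        + ((n + 2) * (c * x - 4) + c * (x - c)) * radicalQuotient c n (2 * n + 3) x) := by
  have hsub : ContDiffOn ℝ (n + 2 : ℕ) (fun y => (y - c) * f y) {x | 4 < x ^ 2} := by fun_prop
  have hsub_deriv := iteratedDeriv_sub_mul_eqOn_radicalQuotient
    (hf.of_le (by exact_mod_cast Nat.le_succ _)) hderiv
  have hsub_next : iteratedDeriv (n + 2) (fun y => (y - c) * f y) x
      = (2 * n + 1) * a * (c * radicalQuotient c n (2 * n + 3) x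
        + (c * x - 4) * deriv (radicalQuotient c n (2 * n + 3)) x) := by
    rw [iteratedDeriv_succ_eq_deriv_of_eqOn isOpen_setOf_four_lt_sq hsub_deriv hx]
    refine HasDerivAt.deriv ?_
    simpa using ((((hasDerivAt_id x).const_mul c).sub_const 4).mul
      (hasDerivAt_radicalQuotient hx).differentiableAt.hasDerivAt).const_mul ((2 * n + 1) * a)
  rw [iteratedDeriv_sub_const_mul (hsub.contDiffAt (isOpen_setOf_four_lt_sq.mem_nhds hx)),
    hsub_next, hsub_deriv hx]
  push_cast
  ring

theorem iteratedDeriv_linear_mul_of_eqOn_radicalQuotient {b : ℝ}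
    (hg : ContDiffOn ℝ (n + 2 : ℕ) g {x | 4 < x ^ 2})
    (hderiv : EqOn (iteratedDeriv (n + 1) g)
      (fun x => b * radicalQuotient c (n + 1) (2 * n + 3) x) {x | 4 < x ^ 2}) (hx : 4 < x ^ 2) :
    iteratedDeriv (n + 2) (fun y => (-c * y + 4) * g y) x
      = b * ((-c * x + 4) * ((x - c) * deriv (radicalQuotient c n (2 * n + 3)) x)
        + ((-c * x + 4) - (n + 2) * c * (x - c)) * radicalQuotient c n (2 * n + 3) x) := by
  have hg_next : iteratedDeriv (n + 2) g x = b * (radicalQuotient c n (2 * n + 3) x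
      + (x - c) * deriv (radicalQuotient c n (2 * n + 3)) x) := by
    rw [iteratedDeriv_succ_eq_deriv_of_eqOn isOpen_setOf_four_lt_sq hderiv hx]
    simp only [radicalQuotient_succ_left]
    refine HasDerivAt.deriv ?_
    simpa using (((hasDerivAt_id x).sub_const c).mul
      (hasDerivAt_radicalQuotient hx).differentiableAt.hasDerivAt).const_mul b
  rw [iteratedDeriv_linear_mul (hg.contDiffAt (isOpen_setOf_four_lt_sq.mem_nhds hx)), hg_next,
    hderiv hx]
  beta_reduce
  rw [radicalQuotient_succ_left]
  push_cast
  ring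

theorem iteratedDeriv_recurrence_eqOn_radicalQuotient
    (hf : ContDiffOn ℝ (n + 2 : ℕ) f {x | 4 < x ^ 2})
    (hg : ContDiffOn ℝ (n + 2 : ℕ) g {x | 4 < x ^ 2})
    (hf_deriv : EqOn (iteratedDeriv n f) (fun x => a * radicalQuotient c n (2 * n + 1) x)
      {x | 4 < x ^ 2})
    (hg_deriv : EqOn (iteratedDeriv (n + 1) g)
      (fun x => -2 * (2 * n + 1) * a * radicalQuotient c (n + 1) (2 * n + 3) x) {x | 4 < x ^ 2}) :
    EqOn
      (iteratedDeriv (n + 2) (fun y => (-c * y + 4) * g y - (y - c) * ((y - c) * f y)))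
      (fun x => 4 * (2 * n + 1) * (2 * n + 3) * a * radicalQuotient c (n + 2) (2 * n + 5) x)
      {x | 4 < x ^ 2} := by
  intro x hx
  have hx_nhds := isOpen_setOf_four_lt_sq.mem_nhds hx
  have hfst : ContDiffAt ℝ (n + 2 : ℕ) (fun y => (-c * y + 4) * g y) x :=
    ContDiffOn.contDiffAt (by fun_prop) hx_nhds
  have hsnd : ContDiffAt ℝ (n + 2 : ℕ) (fun y => (y - c) * ((y - c) * f y)) x :=
    ContDiffOn.contDiffAt (by fun_prop) hx_nhds
  rw [iteratedDeriv_fun_sub hfst hsnd,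
    iteratedDeriv_linear_mul_of_eqOn_radicalQuotient hg hg_deriv hx,
    iteratedDeriv_sub_mul_sub_mul_of_eqOn_radicalQuotient hf hf_deriv hx,
    sub_mul_deriv_radicalQuotient hx]
  simp only [radicalQuotient_succ_left, radicalQuotient_add_two_right (j := 2 * n + 3) hx]
  have hR : x ^ 2 - 4 ≠ 0 := (sub_pos.2 hx).ne'
  push_cast
  field_simp
  ring

end RadicalQuotient

section VOf

variable {u w : ℝ}

theorem vOf_mul_conj (hw : 4 ≤ w ^ 2) : vOf w * ((w - √(w ^ 2 - 4)) / 2) = 1 := by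
  rw [vOf]
  linear_combination -Real.sq_sqrt (sub_nonneg.2 hw) / 4

theorem vOf_ne_zero (hw : 4 ≤ w ^ 2) : vOf w ≠ 0 :=
  left_ne_zero_of_mul_eq_one (vOf_mul_conj hw)

theorem inv_vOf (hw : 4 ≤ w ^ 2) : (vOf w)⁻¹ = (w - √(w ^ 2 - 4)) / 2 :=
  inv_eq_of_mul_eq_one_right (vOf_mul_conj hw)

theorem vOf_add_inv (hw : 4 ≤ w ^ 2) : vOf w + (vOf w)⁻¹ = w := by
  rw [inv_vOf hw, vOf]
  ring

theorem vOf_sub_inv (hw : 4 ≤ w ^ 2) : vOf w - (vOf w)⁻¹ = √(w ^ 2 - 4) := by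
  rw [inv_vOf hw, vOf]
  ring

theorem two_le_add_inv (hu : 0 < u) : 2 ≤ u + u⁻¹ := by
  have hsq : u + u⁻¹ - 2 = (u - 1) ^ 2 / u := by
    field_simp
    ring
  have : 0 ≤ (u - 1) ^ 2 / u := by positivity
  linarith

theorem lt_vOf (hu : 0 < u) (hw : u + u⁻¹ < w) : u < vOf w := by
  have hw2 : 2 < w := (two_le_add_inv hu).trans_lt hw
  have hv : 1 < vOf w := by
    rw [vOf]
    linarith [Real.sqrt_nonneg (w ^ 2 - 4)]
  by_contra! hvu
  have hgap : 0 ≤ (u - vOf w) * (1 - (u * vOf w)⁻¹) :=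
    mul_nonneg (sub_nonneg.2 hvu) (sub_nonneg.2 (inv_le_one_of_one_le₀ (by nlinarith)))
  have hgap_eq : (u - vOf w) * (1 - (u * vOf w)⁻¹) = u + u⁻¹ - (vOf w + (vOf w)⁻¹) := by
    field_simp
    ring
  rw [hgap_eq, vOf_add_inv (by nlinarith)] at hgap
  linarith

end VOf

section PowerPart

/-- The non-polynomial part `A^n / √(w² - 4)`, where `A = 2 - uv - (uv)⁻¹` and `v = v(w)`, of
`Δ_{n,u}` on `(u + u⁻¹, ∞)`. -/
noncomputable def powerPart (u : ℝ) (n : ℕ) (w : ℝ) : ℝ :=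
  (2 - u * vOf w - (u * vOf w)⁻¹) ^ n / √(w ^ 2 - 4)

variable {u w : ℝ}

theorem powerPart_zero : powerPart u 0 w = radicalQuotient (u + u⁻¹) 0 1 w := by
  simp [powerPart, radicalQuotient]

theorem powerPart_one (hw : 4 < w ^ 2) :
    powerPart u 1 w
      = (-((u + u⁻¹) / 2) * w + 2) * radicalQuotient (u + u⁻¹) 0 1 w - (u - u⁻¹) / 2 := by
  have hr : √(w ^ 2 - 4) ≠ 0 := (Real.sqrt_pos.2 (sub_pos.2 hw)).ne'
  rw [powerPart, radicalQuotient, mul_inv, inv_vOf hw.le, vOf]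
  generalize u⁻¹ = t
  field_simp
  ring

theorem powerPart_add_two (hu : u ≠ 0) (hw : 4 ≤ w ^ 2) (n : ℕ) :
    powerPart u (n + 2) w
      = (-(u + u⁻¹) * w + 4) * powerPart u (n + 1) w
        - (w - (u + u⁻¹)) * ((w - (u + u⁻¹)) * powerPart u n w) := by
  have hv := vOf_ne_zero hw
  have hsum := vOf_add_inv hw
  have quadratic : (2 - u * vOf w - (u * vOf w)⁻¹) ^ 2
      = (-(u + u⁻¹) * w + 4) * (2 - u * vOf w - (u * vOf w)⁻¹) - (w - (u + u⁻¹)) ^ 2 := by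
    generalize vOf w = v at hv hsum ⊢
    rw [← hsum]
    field_simp
    ring
  simp only [powerPart, pow_add]
  rw [quadratic]
  ring

theorem contDiffOn_powerPart (hu : u ≠ 0) (n : ℕ) {N : WithTop ℕ∞} :
    ContDiffOn ℝ N (powerPart u n) {w | 4 < w ^ 2} := by
  have hsqrt : ContDiffOn ℝ N (fun w : ℝ => √(w ^ 2 - 4)) {w | 4 < w ^ 2} :=
    ContDiffOn.sqrt (by fun_prop) fun w hw => (sub_pos.2 hw).ne'
  have hv : ContDiffOn ℝ N vOf {w | 4 < w ^ 2} := by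
    unfold vOf
    fun_prop
  have hinv : ContDiffOn ℝ N (fun w => (u * vOf w)⁻¹) {w | 4 < w ^ 2} :=
    ContDiffOn.inv (by fun_prop) fun w hw => mul_ne_zero hu (vOf_ne_zero (le_of_lt hw))
  exact ContDiffOn.div (by fun_prop) hsqrt fun w hw => (Real.sqrt_pos.2 (sub_pos.2 hw)).ne'

theorem deriv_powerPart_one (hw : 4 < w ^ 2) :
    deriv (powerPart u 1) w = -2 * radicalQuotient (u + u⁻¹) 1 3 w := by
  have heq : powerPart u 1 =ᶠ[nhds w] fun y =>
      (-((u + u⁻¹) / 2) * y + 2) * radicalQuotient (u + u⁻¹) 0 1 y - (u - u⁻¹) / 2 := by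
    filter_upwards [isOpen_setOf_four_lt_sq.mem_nhds hw] with y hy using powerPart_one hy
  have hlin : HasDerivAt (fun y : ℝ => -((u + u⁻¹) / 2) * y + 2) (-((u + u⁻¹) / 2)) w := by
    simpa using ((hasDerivAt_id w).const_mul (-((u + u⁻¹) / 2))).add_const 2
  have hmul := (hlin.fun_mul
    (hasDerivAt_radicalQuotient (c := u + u⁻¹) (m := 0) (j := 1) hw)).sub_const
    ((u - u⁻¹) / 2)
  have hR : w ^ 2 - 4 ≠ 0 := (sub_pos.2 hw).ne'
  rw [heq.deriv_eq, hmul.deriv]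
  simp only [radicalQuotient_succ_left, radicalQuotient_add_two_right (j := 1) hw]
  push_cast
  field_simp
  ring

theorem iteratedDeriv_powerPart (hu : u ≠ 0) (n : ℕ) :
    EqOn (iteratedDeriv n (powerPart u n))
      (fun w => (-1) ^ n * (2 * n).factorial / n.factorial
        * radicalQuotient (u + u⁻¹) n (2 * n + 1) w) {w | 4 < w ^ 2} := by
  induction n using Nat.twoStepInduction with
  | zero =>
    intro w _
    simp [powerPart_zero]
  | one =>
    intro w hw
    simp [deriv_powerPart_one hw]
  | more n ihf ihg =>
    intro w hw
    have coeff_succ (m : ℕ) : ((-1) ^ (m + 1) * (2 * (m + 1)).factorial / (m + 1).factorial : ℝ)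
        = -2 * (2 * m + 1) * ((-1) ^ m * (2 * m).factorial / m.factorial) := by
      rw [show 2 * (m + 1) = 2 * m + 1 + 1 by ring]
      simp only [Nat.factorial_succ]
      push_cast
      field_simp
      ring
    have hrec : EqOn (powerPart u (n + 2)) _ {w | 4 < w ^ 2} :=
      fun y hy => powerPart_add_two hu (le_of_lt hy) n
    have step := iteratedDeriv_recurrence_eqOn_radicalQuotient (contDiffOn_powerPart hu n)
      (contDiffOn_powerPart hu (n + 1)) ihf (by rw [coeff_succ] at ihg; exact ihg) hw
    rw [(hrec.eventuallyEq_of_mem (isOpen_setOf_four_lt_sq.mem_nhds hw)).iteratedDeriv_eq]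
    refine step.trans ?_
    simp only [coeff_succ (n + 1), coeff_succ n]
    push_cast
    ring_nf

end PowerPart

section Binomial

theorem Pkhat_eq_sum (k : ℕ) (x : ℝ) :
    Pkhat k x = ∑ n ∈ Finset.range k, ((2 * k).choose (n + 1 + k) : ℝ) * (-x) ^ (n + 1) := by
  rw [Pkhat, Pk, Finset.sum_range_succ']
  simp

theorem neg_pow_mul_Pk (k : ℕ) (x : ℝ) :
    (-x) ^ k * Pk k x
      = ∑ i ∈ Finset.range (k + 1), (-x) ^ (k + i) * ((2 * k).choose (k + i) : ℝ) := by
  rw [Pk, Finset.mul_sum]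
  refine Finset.sum_congr rfl fun i _ => ?_
  rw [add_comm i k, pow_add]
  ring

theorem neg_pow_mul_Pkhat_inv (k : ℕ) {x : ℝ} (hx : x ≠ 0) :
    (-x) ^ k * Pkhat k x⁻¹
      = ∑ i ∈ Finset.range k, (-x) ^ i * ((2 * k).choose i : ℝ) := by
  rw [Pkhat_eq_sum, Finset.mul_sum, ← Finset.sum_range_reflect]
  refine Finset.sum_congr rfl fun i hi => ?_
  have hik := Finset.mem_range.1 hi
  have hchoose : (2 * k).choose (k - 1 - i + 1 + k) = (2 * k).choose i :=
    Nat.choose_symm_of_eq_add (by omega)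
  have hpow : (-x) ^ k * (-x⁻¹) ^ (k - i) = (-x) ^ i := by
    rw [← inv_neg, inv_pow, ← pow_sub₀ _ (neg_ne_zero.2 hx) (Nat.sub_le k i),
      Nat.sub_sub_self hik.le]
  rw [hchoose, show k - 1 - i + 1 = k - i by omega, mul_left_comm, hpow, mul_comm]

theorem Pk_add_Pkhat_inv (k : ℕ) {x : ℝ} (hx : x ≠ 0) :
    Pk k x + Pkhat k x⁻¹ = (2 - x - x⁻¹) ^ k := by
  refine mul_left_cancel₀ (pow_ne_zero k (neg_ne_zero.2 hx)) ?_
  calc (-x) ^ k * (Pk k x + Pkhat k x⁻¹)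
      = ∑ i ∈ Finset.range (k + (k + 1)), (-x) ^ i * ((2 * k).choose i : ℝ) := by
        rw [mul_add, neg_pow_mul_Pk, neg_pow_mul_Pkhat_inv k hx,
          Finset.sum_range_add _ k (k + 1), add_comm]
    _ = (-x + 1) ^ (2 * k) := by
        rw [add_pow, show k + (k + 1) = 2 * k + 1 by ring]
        simp only [one_pow, mul_one]
    _ = (-x) ^ k * (2 - x - x⁻¹) ^ k := by
        rw [pow_mul, ← mul_pow]
        congr 1
        field_simp
        ring

end Binomial

section PolynomialPart

open Polynomial Chebyshev

theorem chebyshev_S_eval_add_mul_sub {R : Type*} [CommRing R] {x y : R} (hxy : x * y = 1) (n : ℕ) :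
    (S R n).eval (x + y) * (x - y) = x ^ (n + 1) - y ^ (n + 1) := by
  induction n using Nat.twoStepInduction with
  | zero => simp
  | one =>
    rw [Nat.cast_one, S_one, eval_X]
    ring
  | more n ih₀ ih₁ =>
    push_cast at ih₁ ⊢
    rw [S_add_two, eval_sub, eval_mul, eval_X]
    linear_combination (x + y) * ih₁ - ih₀ + (x ^ (n + 1) - y ^ (n + 1)) * hxy

theorem degree_chebyshev_S (R : Type*) [CommRing R] [Nontrivial R] (n : ℕ) :
    (S R n).degree = n := by
  induction n using Nat.twoStepInduction with
  | zero => simp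
  | one => simp
  | more n ih₀ ih₁ =>
    have hdegree : (X * S R (n + 1)).degree = ((n + 2 : ℕ) : WithBot ℕ) := by
      push_cast at ih₁
      rw [mul_comm, degree_mul_X, ih₁]
      norm_cast
    push_cast
    rw [S_add_two, degree_sub_eq_left_of_degree_lt, hdegree]
    · norm_cast
    · rw [ih₀, hdegree]
      norm_cast
      omega

/-- The polynomial subtracted from the non-polynomial part in `Δ_{k,u}` on `(u + u⁻¹, ∞)`. -/
noncomputable def polynomialPart (k : ℕ) (u : ℝ) : ℝ[X] :=
  ∑ n ∈ Finset.range k, (((2 * k).choose (n + 1 + k) : ℝ) * (-u) ^ (n + 1)) • S ℝ n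

theorem degree_polynomialPart_lt (k : ℕ) (u : ℝ) : (polynomialPart k u).degree < k := by
  refine (degree_sum_le _ _).trans_lt ((Finset.sup_lt_iff (WithBot.bot_lt_coe k)).2 fun n hn => ?_)
  calc _ ≤ (S ℝ n).degree := degree_smul_le _ _
    _ < k := by
        rw [degree_chebyshev_S]
        exact_mod_cast Finset.mem_range.1 hn

theorem eval_polynomialPart_mul_sub_inv (k : ℕ) (u : ℝ) {v : ℝ} (hv : v ≠ 0) :
    (polynomialPart k u).eval (v + v⁻¹) * (v - v⁻¹) = Pkhat k (u * v) - Pkhat k (u / v) := by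
  rw [polynomialPart, eval_finsetSum, Finset.sum_mul, Pkhat_eq_sum, Pkhat_eq_sum,
    ← Finset.sum_sub_distrib]
  refine Finset.sum_congr rfl fun n _ => ?_
  rw [eval_smul, smul_eq_mul, mul_assoc, chebyshev_S_eval_add_mul_sub (mul_inv_cancel₀ hv),
    div_eq_mul_inv, ← neg_mul, ← neg_mul, mul_pow, mul_pow]
  ring

theorem deltaKU_eq_powerPart_sub_eval (k : ℕ) {u w : ℝ} (hu : 0 < u) (hw : u + u⁻¹ < w) :
    DeltaKU k u w = powerPart u k w - (polynomialPart k u).eval w := by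
  have hw_sq : 4 < w ^ 2 := by nlinarith [two_le_add_inv hu]
  have hv : 0 < vOf w := hu.trans (lt_vOf hu hw)
  have huv : 1 ≤ u * vOf w :=
    (inv_le_iff_one_le_mul₀' hu).1 (lt_vOf (inv_pos.2 hu) (by rwa [inv_inv, add_comm])).le
  have hu_div_v : ¬ 1 ≤ u / vOf w := by
    rw [not_le, div_lt_one hv]
    exact lt_vOf hu hw
  have hd : vOf w - (vOf w)⁻¹ ≠ 0 := by
    rw [vOf_sub_inv hw_sq.le]
    exact (Real.sqrt_pos.2 (sub_pos.2 hw_sq)).ne'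
  have hbinom := Pk_add_Pkhat_inv k (inv_ne_zero (mul_pos hu hv).ne')
  rw [inv_inv] at hbinom
  have hpoly := eval_polynomialPart_mul_sub_inv k u hv.ne'
  rw [vOf_add_inv hw_sq.le] at hpoly
  rw [DeltaKU, psiK, psiK, if_pos huv, if_neg hu_div_v, powerPart, ← vOf_sub_inv hw_sq.le,
    div_eq_iff hd, sub_mul, div_mul_cancel₀ _ hd, hpoly, sub_right_comm, ← hbinom]
  ring

end PolynomialPart

/-- Lemma 5: for `k ≥ 1`, `u > 0`, `u ≠ 1`, and every `w > u + u⁻¹`,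
`Δ_{k,u}^{(k)}(w) = (-1)^k (2k)! (w - u - u⁻¹)^k / (k! (w² - 4)^{k+1/2})`. -/
theorem deltaKU_kth_derivative (k : ℕ) (hk : 1 ≤ k) (u : ℝ) (hu : 0 < u) (hu1 : u ≠ 1)
    (w : ℝ) (hw : u + u⁻¹ < w) :
    iteratedDeriv k (DeltaKU k u) w
      = (-1 : ℝ) ^ k * ((2 * k).factorial : ℝ) * (w - u - u⁻¹) ^ k /
          ((k.factorial : ℝ) * (w ^ 2 - 4) ^ ((k : ℝ) + 1 / 2)) := by
  have hw_sq : 4 < w ^ 2 := by nlinarith [two_le_add_inv hu]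
  have hdecomp : DeltaKU k u =ᶠ[nhds w]
      fun x => powerPart u k x - (polynomialPart k u).eval x := by
    filter_upwards [Ioi_mem_nhds hw] with x hx using deltaKU_eq_powerPart_sub_eval k hu hx
  have hpower : ContDiffAt ℝ k (powerPart u k) w :=
    (contDiffOn_powerPart hu.ne' k).contDiffAt (isOpen_setOf_four_lt_sq.mem_nhds hw_sq)
  have hpoly : ContDiffAt ℝ k (fun x => (polynomialPart k u).eval x) w := by
    simpa using ((polynomialPart k u).contDiff_aeval (𝕜 := ℝ) k).contDiffAt
  rw [hdecomp.iteratedDeriv_eq, iteratedDeriv_fun_sub hpower hpoly,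
    iteratedDeriv_powerPart hu.ne' k hw_sq,
    iteratedDeriv_eval_eq_zero_of_degree_lt (degree_polynomialPart_lt k u), Pi.zero_apply, sub_zero]
  beta_reduce
  rw [radicalQuotient_eq_div_rpow hw_sq.le, div_mul_div_comm, sub_sub]
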